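/- With U_k ∈ M_k(C(T)) the unitary defined by (U_k)_{1,k}(z) = z, (U_k)_{j+1,j}(z) = 1 for 1 ≤ j ≤ k-1, and zeros elsewhere: if (λ_l)_{l∈ℤ} ∈ ℓ¹(ℤ) satisfies Σ_{l∈ℤ} λ_l U_k^l = 0 in M_k(C(T)), then λ_l = 0 for all l ∈ ℤ. Consequently the map sending z^l to U_k^l extends to a *-monomorphism π_k : C(T) → M_k(C(T)). -/

import Mathlib

/-- The character `z ↦ z^l` on the unit circle, as a continuous function. -/
noncomputable def circleChar (n : ℤ) : C(Circle, ℂ) :=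
  ⟨fun z => ((z ^ n : Circle) : ℂ), continuous_subtype_val.comp (continuous_zpow n)⟩

/-- The shift-type matrix `U_k ∈ M_k(C(𝕋))`. -/
noncomputable def shiftUnitary (k : ℕ) : Matrix (Fin k) (Fin k) C(Circle, ℂ) :=
  fun i j =>
    if (i : ℕ) = 0 ∧ (j : ℕ) = k - 1 then ⟨fun z => (z : ℂ), continuous_subtype_val⟩
    else if (i : ℕ) = (j : ℕ) + 1 then 1 else 0

/-- The character `z ↦ z` as a unitary of `C(𝕋)`. -/
noncomputable def circleCharOne : unitary C(Circle, ℂ) :=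
  ⟨circleChar 1, by
    rw [Unitary.mem_iff]
    constructor <;> ext z <;> simp [circleChar, ← Complex.normSq_eq_conj_mul_self, Complex.mul_conj]⟩

lemma coe_circleCharOne_zpow (l : ℤ) :
    ((circleCharOne ^ l : unitary C(Circle, ℂ)) : C(Circle, ℂ)) = circleChar l := by
  ext z
  have h := map_zpow (Unitary.map (.ofClass (ContinuousMap.evalStarAlgHom ℂ ℂ z))) circleCharOne l
  refine (congrArg Subtype.val h).trans ?_
  rw [Unitary.coe_zpow]
  change ((z ^ (1 : ℤ) : Circle) : ℂ) ^ l = ((z ^ l : Circle) : ℂ)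
  rw [zpow_one, Circle.coe_zpow]

lemma map_circleChar {A : Type*} [Ring A] [StarRing A] [Algebra ℂ A]
    (π : C(Circle, ℂ) →⋆ₐ[ℂ] A) (u : unitary A) (h : π (circleChar 1) = u) (l : ℤ) :
    π (circleChar l) = (u ^ l : unitary A) := by
  have hu : Unitary.map (.ofClass π) circleCharOne = u := Subtype.ext h
  rw [← hu, ← map_zpow, ← coe_circleCharOne_zpow]
  rfl

/-- A unitary of a C⋆-algebra whose spectrum is the whole circle generates a copy of `C(𝕋)`. -/
lemma exists_injective_starAlgHom_circleChar_one {A : Type*} [CStarAlgebra A] (u : A)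
    (hu : u ∈ unitary A) (hs : ∀ w : Circle, (w : ℂ) ∈ spectrum ℂ u) :
    ∃ π : C(Circle, ℂ) →⋆ₐ[ℂ] A,
      Function.Injective π ∧ Continuous π ∧ π (circleChar 1) = u := by
  have hn : IsStarNormal u := ⟨by
    rw [commute_iff_eq, Unitary.star_mul_self_of_mem hu, Unitary.mul_star_self_of_mem hu]⟩
  let ι : C(spectrum ℂ u, Circle) :=
    ⟨fun x => ⟨x, spectrum.subset_circle_of_unitary hu x.2⟩, by fun_prop⟩
  refine ⟨(cfcHom hn).comp (ContinuousMap.compStarAlgHom' ℂ ℂ ι), ?_, ?_, ?_⟩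
  · refine (cfcHom_injective hn).comp fun f g hfg => ?_
    ext w
    exact DFunLike.congr_fun hfg ⟨w, hs w⟩
  · exact (cfcHom_continuous hn).comp (ContinuousMap.continuous_precomp ι)
  · rw [StarAlgHom.comp_apply]
    convert cfcHom_id hn
    ext x
    simp only [circleChar, zpow_one]
    rfl

lemma summable_smul_circleChar {lam : ℤ → ℂ} (h : Summable fun l => ‖lam l‖) :
    Summable fun l => lam l • circleChar l := by
  refine Summable.of_norm_bounded h fun l => ?_
  rw [norm_smul]
  refine mul_le_of_le_one_right (norm_nonneg _) ?_
  rw [ContinuousMap.norm_le _ zero_le_one]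
  intro z
  exact (Circle.norm_coe _).le

lemma eq_zero_of_hasSum_smul_circleChar {lam : ℤ → ℂ}
    (h : HasSum (fun l => lam l • circleChar l) 0) (m : ℤ) : lam m = 0 := by
  have : Fact (0 < (1 : ℝ)) := ⟨one_pos⟩
  let c : C(AddCircle (1 : ℝ), Circle) := ⟨AddCircle.toCircle, AddCircle.continuous_toCircle⟩
  let Φ : C(Circle, ℂ) →L[ℂ] ℂ :=
    (innerSL ℂ (fourierLp (T := (1 : ℝ)) 2 m)).comp
      ((ContinuousMap.toLp (E := ℂ) 2 AddCircle.haarAddCircle ℂ).comp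
        ⟨(ContinuousMap.compStarAlgHom' ℂ ℂ c).toAlgHom.toLinearMap,
          ContinuousMap.continuous_precomp c⟩)
  have hc (l : ℤ) : (circleChar l).comp c = fourier l := by
    ext x
    simp [circleChar, c, fourier_apply, AddCircle.toCircle_zsmul]
  have hΦ (l : ℤ) : Φ (circleChar l) = if m = l then 1 else 0 := by
    rw [← orthonormal_iff_ite.mp (orthonormal_fourier (T := (1 : ℝ))) m l, fourierLp, fourierLp, ← hc l]
    rfl
  have h₁ : HasSum (fun l => if l = m then lam m else 0) (Φ 0) := by
    convert h.mapL Φ using 2 with l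
    rw [map_smul, hΦ, smul_eq_mul]
    grind
  rw [map_zero] at h₁
  exact (hasSum_ite_eq m (lam m)).unique h₁

lemma mem_spectrum_of_mulVec_eq_smul {K n : Type*} [Field K] [Fintype n] [DecidableEq n]
    {M : Matrix n n K} {μ : K} {v : n → K} (hv : v ≠ 0) (h : M.mulVec v = μ • v) :
    μ ∈ spectrum K M := by
  rw [← Matrix.spectrum_toLin']
  exact (Module.End.hasEigenvalue_of_hasEigenvector
    (Module.End.hasEigenvector_iff.mpr ⟨Module.End.mem_eigenspace_iff.mpr h, hv⟩)).mem_spectrum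

lemma map_shiftUnitary_mulVec {k : ℕ} (hk : 1 ≤ k) (w : Circle) :
    ((shiftUnitary k).map fun f => f (w ^ k)).mulVec (fun j => ((w : ℂ) ^ (j : ℕ))⁻¹) =
      (w : ℂ) • fun j : Fin k => ((w : ℂ) ^ (j : ℕ))⁻¹ := by
  have hw : (w : ℂ) ≠ 0 := w.coe_ne_zero
  funext i
  simp only [Matrix.mulVec, dotProduct, Matrix.map_apply, Pi.smul_apply, smul_eq_mul]
  obtain ⟨i, hi⟩ := i
  cases i with
  | zero =>
    rw [Finset.sum_eq_single ⟨k - 1, by omega⟩]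
    · obtain ⟨k, rfl⟩ := Nat.exists_eq_add_of_le' hk
      simp only [shiftUnitary, Nat.add_sub_cancel, and_self, if_true, pow_zero, inv_one, mul_one]
      change ((w ^ (k + 1) : Circle) : ℂ) * _ = _
      rw [Circle.coe_pow, pow_succ]
      field_simp
    · intro j _ hj
      have : (j : ℕ) ≠ k - 1 := fun h => hj (Fin.ext h)
      simp [shiftUnitary, this]
    · simp
  | succ i =>
    rw [Finset.sum_eq_single ⟨i, by omega⟩]
    · simp [shiftUnitary, pow_succ, hw]
    · intro j _ hj
      have : i ≠ (j : ℕ) := fun h => hj (Fin.ext h.symm)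
      simp [shiftUnitary, this]
    · simp

lemma coe_mem_spectrum_shiftUnitary {k : ℕ} (hk : 1 ≤ k) (w : Circle) :
    (w : ℂ) ∈ spectrum ℂ (shiftUnitary k) := by
  refine AlgHom.spectrum_apply_subset
    (ContinuousMap.evalStarAlgHom ℂ ℂ (w ^ k)).toAlgHom.mapMatrix _
    (mem_spectrum_of_mulVec_eq_smul ?_ (map_shiftUnitary_mulVec hk w))
  intro h
  have := congrFun h ⟨0, hk⟩
  simp at this

open scoped ComplexOrder in
lemma exists_injective_starAlgHom_shiftUnitary {k : ℕ} (hk : 1 ≤ k)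
    (hU : shiftUnitary k ∈ unitary (Matrix (Fin k) (Fin k) C(Circle, ℂ))) :
    ∃ π : C(Circle, ℂ) →⋆ₐ[ℂ] Matrix (Fin k) (Fin k) C(Circle, ℂ),
      Function.Injective π ∧ Continuous π ∧ π (circleChar 1) = shiftUnitary k := by
  let e : Matrix (Fin k) (Fin k) C(Circle, ℂ) ≃⋆ₐ[ℂ] CStarMatrix (Fin k) (Fin k) C(Circle, ℂ) :=
    CStarMatrix.ofMatrixStarAlgEquiv
  obtain ⟨π, hinj, hcont, hπ⟩ := exists_injective_starAlgHom_circleChar_one (e (shiftUnitary k))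
    (Unitary.map_mem e hU) fun w => by
      rw [AlgEquiv.spectrum_eq e]
      exact coe_mem_spectrum_shiftUnitary hk w
  refine ⟨(e.symm : _ →⋆ₐ[ℂ] _).comp π, e.symm.injective.comp hinj, ?_, ?_⟩
  · change Continuous fun f => π f
    exact hcont
  rw [StarAlgHom.comp_apply, hπ]
  exact e.symm_apply_apply _

/-- Integer powers of `U_k` are ℓ¹-independent, and consequently `z^l ↦ U_k^l` extends to
a *-monomorphism `π_k : C(𝕋) → M_k(C(𝕋))`. -/
theorem shiftUnitary_ell1_independent_and_monomorphism (k : ℕ) (hk : 1 ≤ k)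
    (hU : shiftUnitary k ∈ unitary (Matrix (Fin k) (Fin k) C(Circle, ℂ))) :
    (∀ lam : ℤ → ℂ, Summable (fun l => ‖lam l‖) →
      ∑' l : ℤ, lam l • (((⟨shiftUnitary k, hU⟩ :
          unitary (Matrix (Fin k) (Fin k) C(Circle, ℂ))) ^ l :
          unitary (Matrix (Fin k) (Fin k) C(Circle, ℂ))) :
          Matrix (Fin k) (Fin k) C(Circle, ℂ)) = 0 → ∀ l, lam l = 0) ∧
    ∃ π : C(Circle, ℂ) →⋆ₐ[ℂ] Matrix (Fin k) (Fin k) C(Circle, ℂ),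
      Function.Injective π ∧
      ∀ l : ℤ, π (circleChar l) =
        (((⟨shiftUnitary k, hU⟩ :
            unitary (Matrix (Fin k) (Fin k) C(Circle, ℂ))) ^ l :
            unitary (Matrix (Fin k) (Fin k) C(Circle, ℂ))) :
            Matrix (Fin k) (Fin k) C(Circle, ℂ)) := by
  obtain ⟨π, hinj, hcont, hπ⟩ := exists_injective_starAlgHom_shiftUnitary hk hU
  have hchar := map_circleChar π ⟨shiftUnitary k, hU⟩ hπ
  refine ⟨fun lam hlam hsum => ?_, π, hinj, hchar⟩
  have hs := (summable_smul_circleChar hlam).hasSum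
  have hs' := (hs.map π hcont).tsum_eq
  simp only [Function.comp_def, map_smul, hchar] at hs'
  rw [hsum, eq_comm, map_eq_zero_iff π hinj] at hs'
  rw [hs'] at hs
  exact eq_zero_of_hasSum_smul_circleChar hs
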